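/- Let W_Q ∈ ℝ^{d×d} be invertible with condition number κ = κ(W_Q), let τ ∈ [0, 2), and set τ̃ = 2 d τ κ² / (2 + τ (κ² − 1)). Let x⁰, x¹, …, x^δ ∈ ℝ^d be row vectors with ‖x^s‖₂ = √d for every s, and suppose that for each s ∈ {1, …, δ} the cosine similarity of x^s W_Q and x^{s−1} W_Q is at least 1 − τ, i.e. ⟨x^s W_Q, x^{s−1} W_Q⟩ ≥ (1 − τ) ‖x^s W_Q‖₂ ‖x^{s−1} W_Q‖₂. Then for any W_K ∈ ℝ^{d×d}, ‖x^δ W_K − x⁰ W_K‖₂ ≤ ‖W_K‖₂ · δ · √(2 τ̃). -/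

import Mathlib

/-!
Write `u, v` for two consecutive inputs and `p = u W_Q`, `q = v W_Q`. If `‖T y‖ ≤ N ‖y‖` for all
`y`, then testing this on `y = ‖v‖ u + ‖u‖ v` and using `2ab ≤ a² + b²` gives
`‖T u‖ ‖T v‖ + ⟪T u, T v⟫ ≤ N² (‖u‖ ‖v‖ + ⟪u, v⟫)` (`norm_mul_add_inner_map_le`), and `v ↦ -v` gives
the same with both signs reversed. Applying the first form to `W_Q` and the second to `W_Q⁻¹`, and
dividing, yields the angle-distortion bound `tan²(θ/2) ≤ κ² tan²(φ/2)`, since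
`tan²(θ/2) = (‖u‖ ‖v‖ - ⟪u, v⟫) / (‖u‖ ‖v‖ + ⟪u, v⟫)`.

The cosine hypothesis says `(2 - τ)(‖p‖ ‖q‖ - ⟪p, q⟫) ≤ τ (‖p‖ ‖q‖ + ⟪p, q⟫)`, so with
`‖u‖² = ‖v‖² = d` one obtains `‖u - v‖² = 2 (d - ⟪u, v⟫) ≤ 2 τ̃`. The triangle inequality over the `δ`
steps and the operator norm of `W_K` finish the proof.
-/

open scoped BigOperators
open Matrix

/-- Softmax of a vector. -/
noncomputable def softmax {n : ℕ} (z : Fin n → ℝ) : Fin n → ℝ :=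
  fun j => Real.exp (z j) / ∑ k, Real.exp (z k)

/-- ℓ¹ norm. -/
noncomputable def l1 {n : ℕ} (v : Fin n → ℝ) : ℝ := ∑ j, |v j|

/-- ℓ² (Euclidean) norm. -/
noncomputable def l2 {n : ℕ} (v : Fin n → ℝ) : ℝ := Real.sqrt (∑ j, v j ^ 2)

/-- ℓ^∞ norm. -/
noncomputable def linf {n : ℕ} (v : Fin n → ℝ) : ℝ := ⨆ j, |v j|

/-- Spectral norm (operator ℓ²→ℓ² norm) of a matrix acting on row vectors. -/
noncomputable def spec {m n : ℕ} (W : Matrix (Fin m) (Fin n) ℝ) : ℝ :=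
  sSup {c | ∃ x : Fin m → ℝ, l2 x ≤ 1 ∧ c = l2 (x ᵥ* W)}

/-- Frobenius norm of a matrix. -/
noncomputable def frob {m n : ℕ} (W : Matrix (Fin m) (Fin n) ℝ) : ℝ :=
  Real.sqrt (∑ i, ∑ j, W i j ^ 2)

/-- Operator norm of `h ↦ h Eᵀ` from ℓ² to ℓ¹. -/
noncomputable def opNorm21 {m d : ℕ} (E : Matrix (Fin m) (Fin d) ℝ) : ℝ :=
  sSup {c | ∃ h : Fin d → ℝ, l2 h ≤ 1 ∧ c = l1 (h ᵥ* Eᵀ)}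

/-- Operator norm of `h ↦ h Eᵀ` from ℓ² to ℓ^∞. -/
noncomputable def opNorm2inf {m d : ℕ} (E : Matrix (Fin m) (Fin d) ℝ) : ℝ :=
  sSup {c | ∃ h : Fin d → ℝ, l2 h ≤ 1 ∧ c = linf (h ᵥ* Eᵀ)}

/-- Condition number `κ(W) = σ_max(W)/σ_min(W)` of an invertible matrix,
expressed as `σ_max(W) · σ_max(W⁻¹)`. -/
noncomputable def condNum {d : ℕ} (W : Matrix (Fin d) (Fin d) ℝ) : ℝ := spec W * spec W⁻¹

/-- A linear map bounded by `N` increases `‖u‖ ‖v‖ + ⟪u, v⟫` by a factor of at most `N²`. -/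
lemma norm_mul_add_inner_map_le {E F : Type*} [NormedAddCommGroup E] [InnerProductSpace ℝ E]
    [NormedAddCommGroup F] [InnerProductSpace ℝ F] (T : E →ₗ[ℝ] F) {N : ℝ}
    (hT : ∀ y, ‖T y‖ ≤ N * ‖y‖) (u v : E) :
    ‖T u‖ * ‖T v‖ + inner ℝ (T u) (T v) ≤ N ^ 2 * (‖u‖ * ‖v‖ + inner ℝ u v) := by
  rcases eq_or_ne u 0 with rfl | hu
  · simp
  rcases eq_or_ne v 0 with rfl | hv
  · simp
  have hpos : 0 < ‖u‖ * ‖v‖ := by positivity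
  have h1 : ‖T (‖v‖ • u + ‖u‖ • v)‖ ^ 2 ≤ N ^ 2 * ‖‖v‖ • u + ‖u‖ • v‖ ^ 2 := by
    rw [← mul_pow]
    exact pow_le_pow_left₀ (norm_nonneg _) (hT _) 2
  rw [map_add, map_smul, map_smul, norm_add_sq_real, norm_add_sq_real] at h1
  simp only [norm_smul, norm_norm, real_inner_smul_left, real_inner_smul_right] at h1
  have h2 := sq_nonneg (‖v‖ * ‖T u‖ - ‖u‖ * ‖T v‖)
  refine le_of_mul_le_mul_left ?_ hpos
  nlinarith

lemma norm_mul_sub_inner_map_le {E F : Type*} [NormedAddCommGroup E] [InnerProductSpace ℝ E]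
    [NormedAddCommGroup F] [InnerProductSpace ℝ F] (T : E →ₗ[ℝ] F) {N : ℝ}
    (hT : ∀ y, ‖T y‖ ≤ N * ‖y‖) (u v : E) :
    ‖T u‖ * ‖T v‖ - inner ℝ (T u) (T v) ≤ N ^ 2 * (‖u‖ * ‖v‖ - inner ℝ u v) := by
  have h := norm_mul_add_inner_map_le T hT u (-v)
  simpa [sub_eq_add_neg] using h

/-- Right multiplication `x ↦ x W` on row vectors, as a linear map of Euclidean spaces. -/
noncomputable def rowMul {d : ℕ} (W : Matrix (Fin d) (Fin d) ℝ) :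
    EuclideanSpace ℝ (Fin d) →ₗ[ℝ] EuclideanSpace ℝ (Fin d) where
  toFun y := WithLp.toLp 2 (y.ofLp ᵥ* W)
  map_add' y z := by simp [add_vecMul]
  map_smul' c y := by simp [smul_vecMul]

lemma l2_eq_norm {n : ℕ} (v : Fin n → ℝ) : l2 v = ‖WithLp.toLp 2 v‖ := by
  simp [l2, EuclideanSpace.norm_eq]

lemma spec_nonneg {d : ℕ} (W : Matrix (Fin d) (Fin d) ℝ) : 0 ≤ spec W := by
  apply Real.sSup_nonneg
  rintro c ⟨x, -, rfl⟩
  exact Real.sqrt_nonneg _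

lemma norm_rowMul_le {d : ℕ} (W : Matrix (Fin d) (Fin d) ℝ) (y : EuclideanSpace ℝ (Fin d)) :
    ‖rowMul W y‖ ≤ spec W * ‖y‖ := by
  -- Without boundedness the supremum defining `spec` would be the junk value `0`.
  have hbdd : BddAbove {c | ∃ x : Fin d → ℝ, l2 x ≤ 1 ∧ c = l2 (x ᵥ* W)} := by
    refine ⟨‖(rowMul W).toContinuousLinearMap‖, ?_⟩
    rintro c ⟨x, hx, rfl⟩
    rw [l2_eq_norm] at hx ⊢
    have h := (rowMul W).toContinuousLinearMap.le_opNorm (WithLp.toLp 2 x)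
    exact h.trans (mul_le_of_le_one_right (norm_nonneg _) hx)
  rcases eq_or_ne y 0 with rfl | hy
  · simp
  have hy' : 0 < ‖y‖ := norm_pos_iff.mpr hy
  have hle : ‖rowMul W (‖y‖⁻¹ • y)‖ ≤ spec W := by
    refine le_csSup hbdd ⟨(‖y‖⁻¹ • y).ofLp, ?_, ?_⟩
    · rw [l2_eq_norm, WithLp.toLp_ofLp, norm_smul, norm_inv, norm_norm, inv_mul_cancel₀ hy'.ne']
    · rw [l2_eq_norm]; rfl
  rw [map_smul, norm_smul, norm_inv, norm_norm, inv_mul_le_iff₀ hy'] at hle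
  linarith

/-- One step of the drift: the bound `‖u - v‖ ≤ √(2τ̃)` obtained from the angle distortion of
`W_Q`. -/
lemma norm_sub_le_of_cos {d : ℕ} (W : Matrix (Fin d) (Fin d) ℝ) (hW : IsUnit W.det)
    {τ : ℝ} (hτ0 : 0 ≤ τ) (hτ2 : τ < 2) (u v : EuclideanSpace ℝ (Fin d))
    (hu : ‖u‖ = Real.sqrt d) (hv : ‖v‖ = Real.sqrt d)
    (hcos : (1 - τ) * ‖rowMul W u‖ * ‖rowMul W v‖ ≤ inner ℝ (rowMul W u) (rowMul W v)) :
    ‖u - v‖ ≤ Real.sqrt (2 * (2 * d * τ * condNum W ^ 2 / (2 + τ * (condNum W ^ 2 - 1)))) := by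
  have hinv : ∀ y, rowMul W⁻¹ (rowMul W y) = y := by
    intro y
    simp [rowMul, vecMul_vecMul, Matrix.mul_nonsing_inv W hW]
  have hg := norm_mul_add_inner_map_le (rowMul W) (norm_rowMul_le W) u v
  have hf := norm_mul_sub_inner_map_le (rowMul W⁻¹) (norm_rowMul_le W⁻¹) (rowMul W u) (rowMul W v)
  rw [hinv, hinv] at hf
  have hd : ‖u‖ * ‖v‖ = d := by rw [hu, hv, Real.mul_self_sqrt (Nat.cast_nonneg d)]
  rw [hd] at hf hg
  have hden : 0 < 2 + τ * (condNum W ^ 2 - 1) := by nlinarith [mul_nonneg hτ0 (sq_nonneg (condNum W))]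
  have key : (2 - τ) * (d - inner ℝ u v) ≤ τ * condNum W ^ 2 * (d + inner ℝ u v) := by
    calc (2 - τ) * (d - inner ℝ u v)
        ≤ (2 - τ) * (spec W⁻¹ ^ 2 *
            (‖rowMul W u‖ * ‖rowMul W v‖ - inner ℝ (rowMul W u) (rowMul W v))) :=
          mul_le_mul_of_nonneg_left hf (by linarith)
      _ = spec W⁻¹ ^ 2 * ((2 - τ) *
            (‖rowMul W u‖ * ‖rowMul W v‖ - inner ℝ (rowMul W u) (rowMul W v))) := by ring
      _ ≤ spec W⁻¹ ^ 2 * (τ *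
            (‖rowMul W u‖ * ‖rowMul W v‖ + inner ℝ (rowMul W u) (rowMul W v))) :=
          mul_le_mul_of_nonneg_left (by linarith) (sq_nonneg _)
      _ ≤ spec W⁻¹ ^ 2 * (τ * (spec W ^ 2 * (d + inner ℝ u v))) := by gcongr
      _ = τ * condNum W ^ 2 * (d + inner ℝ u v) := by rw [condNum]; ring
  apply Real.le_sqrt_of_sq_le
  rw [norm_sub_sq_real, hu, hv, Real.sq_sqrt (Nat.cast_nonneg d)]
  have : (d : ℝ) - inner ℝ u v ≤ 2 * d * τ * condNum W ^ 2 / (2 + τ * (condNum W ^ 2 - 1)) := by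
    rw [le_div_iff₀ hden]
    linarith
  linarith

/-- If consecutive queries `x^s W_Q`, `x^{s−1} W_Q` all have cosine
similarity at least `1 − τ` and every `x^s` has norm `√d`, then for any `W_K`,
`‖x^δ W_K − x⁰ W_K‖₂ ≤ ‖W_K‖₂ · δ · √(2τ̃)` with
`τ̃ = 2dτκ²/(2 + τ(κ² − 1))`, `κ = κ(W_Q)`. -/
theorem staleness_key_drift_bound {d : ℕ}
    (WQ : Matrix (Fin d) (Fin d) ℝ) (hWQ : IsUnit WQ.det)
    (τ : ℝ) (hτ0 : 0 ≤ τ) (hτ2 : τ < 2)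
    (δ : ℕ) (x : ℕ → Fin d → ℝ)
    (hnorm : ∀ s ≤ δ, l2 (x s) = Real.sqrt d)
    (hcos : ∀ s, 1 ≤ s → s ≤ δ →
      (∑ j, (x s ᵥ* WQ) j * (x (s-1) ᵥ* WQ) j)
        ≥ (1 - τ) * l2 (x s ᵥ* WQ) * l2 (x (s-1) ᵥ* WQ))
    (WK : Matrix (Fin d) (Fin d) ℝ) :
    l2 (fun k => (x δ ᵥ* WK) k - (x 0 ᵥ* WK) k)
      ≤ spec WK * δ *
        Real.sqrt (2 * (2 * d * τ * condNum WQ ^ 2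
                        / (2 + τ * (condNum WQ ^ 2 - 1)))) := by
  set B := Real.sqrt (2 * (2 * d * τ * condNum WQ ^ 2 / (2 + τ * (condNum WQ ^ 2 - 1)))) with hB
  have hstep : ∀ s < δ, ‖WithLp.toLp 2 (x (s + 1)) - WithLp.toLp 2 (x s)‖ ≤ B := by
    intro s hs
    have hc := hcos (s + 1) (by omega) hs
    rw [Nat.add_sub_cancel, l2_eq_norm, l2_eq_norm] at hc
    refine norm_sub_le_of_cos WQ hWQ hτ0 hτ2 _ _ ?_ ?_ ?_
    · rw [← l2_eq_norm]; exact hnorm _ hs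
    · rw [← l2_eq_norm]; exact hnorm _ hs.le
    · refine le_of_le_of_eq hc ?_
      simp [rowMul, PiLp.inner_apply, mul_comm]
  have htel : ∀ s ≤ δ, ‖WithLp.toLp 2 (x s) - WithLp.toLp 2 (x 0)‖ ≤ s * B := by
    intro s
    induction s with
    | zero => intro _; simp
    | succ s ih =>
      intro hs
      have h := norm_sub_le_norm_sub_add_norm_sub (WithLp.toLp 2 (x (s + 1)))
        (WithLp.toLp 2 (x s)) (WithLp.toLp 2 (x 0))
      have h1 := ih (by omega)
      have h2 := hstep s hs
      push_cast
      linarith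
  have hK := norm_rowMul_le WK (WithLp.toLp 2 (x δ) - WithLp.toLp 2 (x 0))
  have heq : l2 (fun k => (x δ ᵥ* WK) k - (x 0 ᵥ* WK) k)
      = ‖rowMul WK (WithLp.toLp 2 (x δ) - WithLp.toLp 2 (x 0))‖ := by
    rw [l2_eq_norm, map_sub]; rfl
  rw [heq, mul_assoc]
  exact hK.trans (mul_le_mul_of_nonneg_left (htel δ le_rfl) (spec_nonneg WK))
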